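/- Smooth-function characterization of manifold-valued controlled rough paths: Let M be a d-dimensional C^∞ manifold without boundary, Hausdorff and second countable, let X = (x, 𝕏) be a weak-geometric p-rough path with control ω on [0,T], let y : [0,T] → M be continuous, and for each s ∈ [0,T] let y_s† : W → T_{y_s}M be a linear map. Then (y, y†) is a chart-controlled rough path if and only if for every smooth function f : M → ℝ, the pair (f ∘ y, s ↦ df_{y_s} ∘ y_s†) is an ℝ-valued rough path controlled by X on [0,T]. -/

import Mathlib

noncomputable section

open scoped BigOperators

/-- `ℝ^n` with the Euclidean norm. -/
abbrev Euc (n : ℕ) : Type := EuclideanSpace ℝ (Fin n)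

/-- The `i`-th standard basis vector of `ℝ^n`. -/
def eb {n : ℕ} (i : Fin n) : Euc n := EuclideanSpace.single i 1

/-- Tensor product of two Euclidean vectors, realized in `ℝ^{n×m}` with the Euclidean norm. -/
def tensorE {n m : ℕ} (v : Euc n) (w : Euc m) : EuclideanSpace ℝ (Fin n × Fin m) :=
  (EuclideanSpace.equiv (Fin n × Fin m) ℝ).symm fun p => v p.1 * w p.2

/-- Application of the (unique) linear extension of a bilinear map `B` to a tensor
`X ∈ ℝ^n ⊗ ℝ^m ≅ ℝ^{n × m}`. -/
def tapply {n m : ℕ} {V : Type*} [NormedAddCommGroup V] [NormedSpace ℝ V]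
    (B : Euc n → Euc m → V) (X : EuclideanSpace ℝ (Fin n × Fin m)) : V :=
  ∑ q : Fin n × Fin m, X q • B (eb q.1) (eb q.2)
/-- `ω` is a control on the simplex `{(s,t) : 0 ≤ s ≤ t ≤ T}`. -/
structure IsControl (T : ℝ) (ω : ℝ → ℝ → ℝ) : Prop where
  cont : ContinuousOn (fun q : ℝ × ℝ => ω q.1 q.2)
    {q : ℝ × ℝ | 0 ≤ q.1 ∧ q.1 ≤ q.2 ∧ q.2 ≤ T}
  nonneg : ∀ ⦃s t : ℝ⦄, 0 ≤ s → s ≤ t → t ≤ T → 0 ≤ ω s t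
  zero : ∀ ⦃s : ℝ⦄, 0 ≤ s → s ≤ T → ω s s = 0
  superadditive : ∀ ⦃s t u : ℝ⦄, 0 ≤ s → s ≤ t → t ≤ u → u ≤ T → ω s t + ω t u ≤ ω s u
/-- `(x, XX)` is a `p`-rough path with control `ω` on `[0,T]`. -/
structure IsRoughPath (T p : ℝ) {k : ℕ} (ω : ℝ → ℝ → ℝ)
    (x : ℝ → Euc k) (XX : ℝ → ℝ → EuclideanSpace ℝ (Fin k × Fin k)) : Prop where
  cont_x : ContinuousOn x (Set.Icc 0 T)
  cont_XX : ContinuousOn (fun q : ℝ × ℝ => XX q.1 q.2)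
    {q : ℝ × ℝ | 0 ≤ q.1 ∧ q.1 ≤ q.2 ∧ q.2 ≤ T}
  chen : ∀ ⦃s t u : ℝ⦄, 0 ≤ s → s ≤ t → t ≤ u → u ≤ T →
    XX s u = XX s t + XX t u + tensorE (x t - x s) (x u - x t)
  bound_x : ∀ ⦃s t : ℝ⦄, 0 ≤ s → s ≤ t → t ≤ T → ‖x t - x s‖ ≤ ω s t ^ (1 / p)
  bound_XX : ∀ ⦃s t : ℝ⦄, 0 ≤ s → s ≤ t → t ≤ T → ‖XX s t‖ ≤ ω s t ^ (2 / p)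
/-- The rough path `(x, XX)` is weak-geometric: the symmetric part of `XX s t` is
`(1/2) x_{s,t} ⊗ x_{s,t}`. -/
def IsWeakGeometric (T : ℝ) {k : ℕ} (x : ℝ → Euc k)
    (XX : ℝ → ℝ → EuclideanSpace ℝ (Fin k × Fin k)) : Prop :=
  ∀ ⦃s t : ℝ⦄, 0 ≤ s → s ≤ t → t ≤ T → ∀ i j : Fin k,
    XX s t (i, j) + XX s t (j, i) = (x t - x s) i * (x t - x s) j
/-- `(y, y')` is a `V`-valued rough path controlled by `X = (x, ·)` (with control `ω`)
on the interval `[a, b]`. -/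
def IsCRP (p : ℝ) {k : ℕ} (ω : ℝ → ℝ → ℝ) (x : ℝ → Euc k)
    {V : Type*} [NormedAddCommGroup V] [NormedSpace ℝ V]
    (a b : ℝ) (y : ℝ → V) (y' : ℝ → Euc k →L[ℝ] V) : Prop :=
  ContinuousOn y (Set.Icc a b) ∧ ContinuousOn y' (Set.Icc a b) ∧
    ∃ C : ℝ, ∀ ⦃s t : ℝ⦄, a ≤ s → s ≤ t → t ≤ b →
      ‖y t - y s - y' s (x t - x s)‖ ≤ C * ω s t ^ (2 / p) ∧
      ‖y' t - y' s‖ ≤ C * ω s t ^ (1 / p)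

open scoped Manifold

/-- The differential `dφ_m : T_mM → ℝ^d` of a chart `φ`, with target read as `ℝ^d`
(recall `TangentSpace (𝓡 d) pt` is by definition `ℝ^d`). -/
def chartDeriv {d : ℕ} {M : Type*} [TopologicalSpace M] [ChartedSpace (Euc d) M]
    (φ : OpenPartialHomeomorph M (Euc d)) (m : M) :
    TangentSpace (𝓡 d) m →L[ℝ] Euc d :=
  mfderiv (𝓡 d) (𝓡 d) φ m

/-- The differential `df_m : T_mM → ℝ` of a real-valued function on `M`. -/
def realDeriv {d : ℕ} {M : Type*} [TopologicalSpace M] [ChartedSpace (Euc d) M]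
    (f : M → ℝ) (m : M) : TangentSpace (𝓡 d) m →L[ℝ] ℝ :=
  mfderiv (𝓡 d) 𝓘(ℝ, ℝ) f m

/-- `(y, y')` is a chart-controlled rough path in the manifold `M`, controlled by the rough
path with first level `x` and control `ω` on `[0,T]`: for every chart `φ` in the maximal
smooth atlas and every `[a,b] ⊆ [0,T]` with `y([a,b]) ⊆ D(φ)`, the chart read-out of
`(y, y')` satisfies the controlled-rough-path estimates. -/
def IsChartCRP (T p : ℝ) {k : ℕ} (ω : ℝ → ℝ → ℝ) (x : ℝ → Euc k)
    {d : ℕ} {M : Type*} [TopologicalSpace M] [ChartedSpace (Euc d) M]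
    [IsManifold (𝓡 d) (⊤ : ℕ∞) M]
    (y : ℝ → M) (y' : (s : ℝ) → Euc k →L[ℝ] TangentSpace (𝓡 d) (y s)) : Prop :=
  ∀ φ : OpenPartialHomeomorph M (Euc d),
    φ ∈ (contDiffGroupoid (⊤ : ℕ∞) (𝓡 d)).maximalAtlas M →
    ∀ a b : ℝ, 0 ≤ a → a ≤ b → b ≤ T → (∀ s ∈ Set.Icc a b, y s ∈ φ.source) →
    ∃ C : ℝ, ∀ ⦃s t : ℝ⦄, a ≤ s → s ≤ t → t ≤ b →
      ‖φ (y t) - φ (y s) - chartDeriv φ (y s) (y' s (x t - x s))‖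
        ≤ C * ω s t ^ (2 / p) ∧
      ‖(chartDeriv φ (y t)).comp (y' t) - (chartDeriv φ (y s)).comp (y' s)‖
        ≤ C * ω s t ^ (1 / p)

/-! With `e = ω ^ (1 / p)`, being controlled by `x` means `z_{s,t} = z'_s x_{s,t} + O(e²)` and
`z'_{s,t} = O(e)` uniformly over `s ≤ t`. These two conditions survive composition with a map
whose derivative is Lipschitz (Taylor's formula), and they can be glued along adjacent intervals
(`z_{s,t} - z'_s x_{s,t}` is additive up to the term `z'_{s,u} x_{u,t} = O(e²)`).

If `(y, y')` is chart-controlled, then `f ∘ y` is locally the composition of a chart read-out with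
`f ∘ φ⁻¹`, so it is locally, hence by compactness globally, controlled. Conversely, on an interval
where `y` stays in the domain of `φ`, a linear functional of `φ`, cut off inside the chart,
coincides near the compact image of `y` with a globally smooth function, and a path in `ℝ^d` is
controlled as soon as all its linear functionals are. -/

open Set Filter Topology Asymptotics
open scoped NNReal

section Simplex

/-- The simplex of ordered pairs of times in `[a, b]`; uniform estimates over `a ≤ s ≤ t ≤ b` are
expressed as `IsBigO` along the principal filter of this set. -/
def timeSimplex (a b : ℝ) : Set (ℝ × ℝ) := {q | a ≤ q.1 ∧ q.1 ≤ q.2 ∧ q.2 ≤ b}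

/-- The increments `f_{s,t} = f t - f s` of a path, as a function of the pair `(s, t)`. -/
def increment {V : Type*} [Sub V] (f : ℝ → V) (q : ℝ × ℝ) : V := f q.2 - f q.1

/-- A gauge on `[a, b]`: a nonnegative function of time intervals which is monotone under
inclusion. The relevant example is `ω ^ (1 / p)` for a control `ω`; see `controlRoot`. -/
structure IsGauge (e : ℝ × ℝ → ℝ) (a b : ℝ) : Prop where
  nonneg : ∀ q ∈ timeSimplex a b, 0 ≤ e q
  mono : ∀ q ∈ timeSimplex a b, ∀ r ∈ timeSimplex q.1 q.2, e r ≤ e q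

variable {V : Type*} [NormedAddCommGroup V] {e : ℝ × ℝ → ℝ} {a b c d : ℝ}

theorem timeSimplex_mono (hca : c ≤ a) (hbd : b ≤ d) : timeSimplex a b ⊆ timeSimplex c d :=
  fun _ hq => ⟨hca.trans hq.1, hq.2.1, hq.2.2.trans hbd⟩

theorem timeSimplex_eq_empty (hba : b < a) : timeSimplex a b = ∅ :=
  eq_empty_of_forall_notMem fun _ hq => hba.not_ge (hq.1.trans (hq.2.1.trans hq.2.2))

theorem fst_mem_Icc_of_mem_timeSimplex {q : ℝ × ℝ} (hq : q ∈ timeSimplex a b) : q.1 ∈ Icc a b :=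
  ⟨hq.1, hq.2.1.trans hq.2.2⟩

theorem snd_mem_Icc_of_mem_timeSimplex {q : ℝ × ℝ} (hq : q ∈ timeSimplex a b) : q.2 ∈ Icc a b :=
  ⟨hq.1.trans hq.2.1, hq.2.2⟩

theorem timeSimplex_subset_union (b : ℝ) :
    timeSimplex a c ⊆ timeSimplex a b ∪ timeSimplex b c ∪ Icc a b ×ˢ Icc b c := by
  rintro ⟨s, t⟩ ⟨has, hst, htc⟩
  rcases le_total t b with htb | hbt
  · exact .inl (.inl ⟨has, hst, htb⟩)
  rcases le_total b s with hbs | hsb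
  · exact .inl (.inr ⟨hbs, hst, htc⟩)
  · exact .inr ⟨⟨has, hsb⟩, hbt, htc⟩

theorem IsGauge.mono_interval (he : IsGauge e c d) (hca : c ≤ a) (hbd : b ≤ d) :
    IsGauge e a b where
  nonneg q hq := he.nonneg q (timeSimplex_mono hca hbd hq)
  mono q hq := he.mono q (timeSimplex_mono hca hbd hq)

theorem IsGauge.norm_mono (he : IsGauge e a b) {q r : ℝ × ℝ} (hq : q ∈ timeSimplex a b)
    (hr : r ∈ timeSimplex q.1 q.2) : ‖e r‖ ≤ ‖e q‖ := by
  rw [Real.norm_of_nonneg (he.nonneg q hq),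
    Real.norm_of_nonneg (he.nonneg r (timeSimplex_mono hq.1 hq.2.2 hr))]
  exact he.mono q hq r hr

theorem IsGauge.pow (he : IsGauge e a b) (n : ℕ) : IsGauge (fun q => e q ^ n) a b where
  nonneg q hq := pow_nonneg (he.nonneg q hq) n
  mono q hq r hr :=
    pow_le_pow_left₀ (he.nonneg r (timeSimplex_mono hq.1 hq.2.2 hr)) (he.mono q hq r hr) n

theorem IsGauge.isBigO_one (he : IsGauge e a b) :
    e =O[𝓟 (timeSimplex a b)] fun _ => (1 : ℝ) := by
  refine isBigO_principal.2 ⟨‖e (a, b)‖, fun q hq => ?_⟩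
  simpa using he.norm_mono (q := (a, b))
    ⟨le_rfl, hq.1.trans (hq.2.1.trans hq.2.2), le_rfl⟩ hq

theorem IsGauge.isBigO_one_of_increment (he : IsGauge e a b) {g : ℝ → V}
    (hg : increment g =O[𝓟 (timeSimplex a b)] e) : g =O[𝓟 (Icc a b)] fun _ => (1 : ℝ) := by
  have hmaps : Tendsto (fun s => (a, s)) (𝓟 (Icc a b)) (𝓟 (timeSimplex a b)) :=
    tendsto_principal_principal.2 fun s hs => ⟨le_rfl, hs.1, hs.2⟩
  have hinc : (fun s => g s - g a) =O[𝓟 (Icc a b)] fun _ => (1 : ℝ) :=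
    (hg.trans he.isBigO_one).comp_tendsto hmaps
  simpa using hinc.add (isBigO_const_const (g a) one_ne_zero (𝓟 (Icc a b)))

theorem isBigO_fst_timeSimplex {g : ℝ → V} (hg : g =O[𝓟 (Icc a b)] fun _ => (1 : ℝ)) :
    (fun q : ℝ × ℝ => g q.1) =O[𝓟 (timeSimplex a b)] fun _ => (1 : ℝ) :=
  hg.comp_tendsto (tendsto_principal_principal.2 fun _ => fst_mem_Icc_of_mem_timeSimplex)

theorem isBigO_snd_timeSimplex {g : ℝ → V} (hg : g =O[𝓟 (Icc a b)] fun _ => (1 : ℝ)) :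
    (fun q : ℝ × ℝ => g q.2) =O[𝓟 (timeSimplex a b)] fun _ => (1 : ℝ) :=
  hg.comp_tendsto (tendsto_principal_principal.2 fun _ => snd_mem_Icc_of_mem_timeSimplex)

theorem IsGauge.isBigO_left (he : IsGauge e a c) {R : ℝ × ℝ → V}
    (hR : R =O[𝓟 (timeSimplex a b)] e) :
    (fun q => R (q.1, b)) =O[𝓟 (Icc a b ×ˢ Icc b c)] e := by
  have hmaps : Tendsto (fun q : ℝ × ℝ => (q.1, b)) (𝓟 (Icc a b ×ˢ Icc b c))
      (𝓟 (timeSimplex a b)) :=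
    tendsto_principal_principal.2 fun q hq => ⟨hq.1.1, hq.1.2, le_rfl⟩
  refine (hR.comp_tendsto hmaps).trans (isBigO_principal.2 ⟨1, fun q hq => ?_⟩)
  simpa using he.norm_mono (q := q) (r := (q.1, b))
    ⟨hq.1.1, hq.1.2.trans hq.2.1, hq.2.2⟩ ⟨le_rfl, hq.1.2, hq.2.1⟩

theorem IsGauge.isBigO_right (he : IsGauge e a c) {R : ℝ × ℝ → V}
    (hR : R =O[𝓟 (timeSimplex b c)] e) :
    (fun q => R (b, q.2)) =O[𝓟 (Icc a b ×ˢ Icc b c)] e := by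
  have hmaps : Tendsto (fun q : ℝ × ℝ => (b, q.2)) (𝓟 (Icc a b ×ˢ Icc b c))
      (𝓟 (timeSimplex b c)) :=
    tendsto_principal_principal.2 fun q hq => ⟨le_rfl, hq.2.1, hq.2.2⟩
  refine (hR.comp_tendsto hmaps).trans (isBigO_principal.2 ⟨1, fun q hq => ?_⟩)
  simpa using he.norm_mono (q := q) (r := (b, q.2))
    ⟨hq.1.1, hq.1.2.trans hq.2.1, hq.2.2⟩ ⟨hq.1.2, hq.2.1, le_rfl⟩

theorem continuousOn_of_isBigO_increment (he : ContinuousOn e (timeSimplex a b))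
    (he₀ : ∀ s ∈ Icc a b, e (s, s) = 0) {g : ℝ → V}
    (hg : increment g =O[𝓟 (timeSimplex a b)] e) : ContinuousOn g (Icc a b) := by
  intro s hs
  have hmaps : MapsTo (fun t : ℝ => (min s t, max s t)) (Icc a b) (timeSimplex a b) :=
    fun t ht => ⟨le_min hs.1 ht.1, min_le_max, max_le hs.2 ht.2⟩
  have hlim : Tendsto (fun t => e (min s t, max s t)) (𝓝[Icc a b] s) (𝓝 0) := by
    have hcont : ContinuousOn (fun t => e (min s t, max s t)) (Icc a b) :=
      he.comp (by fun_prop) hmaps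
    simpa [he₀ s hs] using (hcont s hs).tendsto
  have hbound : (fun t => increment g (min s t, max s t)) =O[𝓝[Icc a b] s]
      fun t => e (min s t, max s t) :=
    hg.comp_tendsto ((tendsto_principal_principal.2 hmaps).mono_left inf_le_right)
  refine tendsto_iff_norm_sub_tendsto_zero.2 ((hbound.trans_tendsto hlim).norm.congr' ?_ |>.trans
    (by simp))
  refine Eventually.of_forall fun t => ?_
  rcases le_total s t with hst | hts
  · simp [increment, hst]
  · simp [increment, hts, norm_sub_rev]

end Simplex

theorem forall_Icc_of_locally {P : ℝ → ℝ → Prop} {a b : ℝ} (hab : a ≤ b)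
    (hloc : ∀ s ∈ Icc a b, ∃ U ∈ 𝓝[Icc a b] s,
      ∀ c d, a ≤ c → c ≤ d → d ≤ b → Icc c d ⊆ U → P c d)
    (htrans : ∀ c d, a ≤ c → c ≤ d → d ≤ b → P a c → P c d → P a d) : P a b := by
  choose U hU hP using hloc
  choose O hO hsO hOU using fun s hs => mem_nhdsWithin.1 (hU s hs)
  obtain ⟨τ, hτ₀, hτ, ⟨N, hN⟩, hcover⟩ := exists_monotone_Icc_subset_open_cover_Icc hab
    (c := fun s : Icc a b => Subtype.val ⁻¹' O s s.2)
    (fun s => (hO s s.2).preimage continuous_subtype_val)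
    (fun s _ => mem_iUnion.2 ⟨s, hsO s s.2⟩)
  have hpiece : ∀ n, P (τ n) (τ (n + 1)) := by
    intro n
    obtain ⟨s, hs⟩ := hcover n
    refine hP s s.2 _ _ (τ n).2.1 (hτ n.le_succ) (τ (n + 1)).2.2 fun r hr => ?_
    have hrab : r ∈ Icc a b := ⟨(τ n).2.1.trans hr.1, hr.2.trans (τ (n + 1)).2.2⟩
    exact hOU s s.2 ⟨@hs ⟨r, hrab⟩ hr, hrab⟩
  have hprefix : ∀ n, P a (τ (n + 1)) := by
    intro n
    induction n with
    | zero => simpa [hτ₀] using hpiece 0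
    | succ n ih => exact htrans _ _ (τ _).2.1 (hτ (n + 1).le_succ) (τ _).2.2 ih (hpiece (n + 1))
  simpa [hN (N + 1) N.le_succ] using hprefix N

section Calculus

variable {W V U : Type*} [NormedAddCommGroup W] [NormedSpace ℝ W]
  [NormedAddCommGroup V] [NormedSpace ℝ V] [NormedAddCommGroup U] [NormedSpace ℝ U]

theorem isBigO_clm_apply {α : Type*} {l : Filter α} {A : α → W →L[ℝ] V} {w : α → W}
    {f g : α → ℝ} (hA : A =O[l] f) (hw : w =O[l] g) :
    (fun q => A q (w q)) =O[l] fun q => f q * g q :=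
  isBoundedBilinearMap_apply.isBigO_comp.trans (hA.norm_left.mul hw.norm_left)

theorem isBigO_clm_comp {α : Type*} {l : Filter α} {A : α → V →L[ℝ] U} {B : α → W →L[ℝ] V}
    {f g : α → ℝ} (hA : A =O[l] f) (hB : B =O[l] g) :
    (fun q => (A q).comp (B q)) =O[l] fun q => f q * g q :=
  isBoundedBilinearMap_comp.isBigO_comp.trans (hA.norm_left.mul hB.norm_left)

theorem norm_sub_sub_fderiv_le_of_lipschitzOnWith {F : V → U} {S : Set V} {K : ℝ≥0}
    (hS : Convex ℝ S) (hF : ∀ v ∈ S, DifferentiableAt ℝ F v)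
    (hK : LipschitzOnWith K (fderiv ℝ F) S) {v w : V} (hv : v ∈ S) (hw : w ∈ S) :
    ‖F w - F v - fderiv ℝ F v (w - v)‖ ≤ K * ‖w - v‖ ^ 2 := by
  have hseg : segment ℝ v w ⊆ S := hS.segment_subset hv hw
  have hbound : ∀ u ∈ segment ℝ v w, ‖fderiv ℝ F u - fderiv ℝ F v‖ ≤ K * ‖w - v‖ := fun u hu =>
    (hK.norm_sub_le (hseg hu) hv).trans (by gcongr; simpa using norm_sub_le_of_mem_segment hu)
  rw [sq, ← mul_assoc]
  exact (convex_segment v w).norm_image_sub_le_of_norm_fderiv_le' (fun u hu => hF u (hseg hu))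
    hbound (left_mem_segment ..) (right_mem_segment ..)

theorem exists_ball_lipschitzOnWith_fderiv {F : V → U} {v₀ : V} (hF : ContDiffAt ℝ 2 F v₀) :
    ∃ r > 0, (∀ v ∈ Metric.ball v₀ r, DifferentiableAt ℝ F v) ∧
      ∃ K, LipschitzOnWith K (fderiv ℝ F) (Metric.ball v₀ r) := by
  have hdiff : ∀ᶠ v in 𝓝 v₀, DifferentiableAt ℝ F v :=
    (hF.eventually (by simp)).mono fun v hv => hv.differentiableAt (by simp)
  obtain ⟨K, S, hS, hK⟩ := (hF.fderiv_right (m := 1) (by norm_num)).exists_lipschitzOnWith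
  obtain ⟨r, hr, hball⟩ := Metric.eventually_nhds_iff_ball.1 (hdiff.and hS)
  exact ⟨r, hr, fun v hv => (hball v hv).1, K, hK.mono fun v hv => (hball v hv).2⟩

end Calculus

section Controlled

variable {W V U : Type*} [NormedAddCommGroup W] [NormedSpace ℝ W]
  [NormedAddCommGroup V] [NormedSpace ℝ V] [NormedAddCommGroup U] [NormedSpace ℝ U]
  {e : ℝ × ℝ → ℝ} {x : ℝ → W} {a b c d : ℝ} {z : ℝ → V} {z' : ℝ → W →L[ℝ] V}

/-- The remainder `z_{s,t} - z'_s x_{s,t}` of the first-order expansion of `z` along `x`. -/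
def crpRemainder (x : ℝ → W) (z : ℝ → V) (z' : ℝ → W →L[ℝ] V) (q : ℝ × ℝ) : V :=
  increment z q - z' q.1 (increment x q)

theorem crpRemainder_eq_add (s u t : ℝ) :
    crpRemainder x z z' (s, t) = crpRemainder x z z' (s, u) + crpRemainder x z z' (u, t) +
      increment z' (s, u) (increment x (u, t)) := by
  simp only [crpRemainder, increment, map_sub, sub_apply]
  abel

/-- The estimates defining a path `(z, z')` on `[a, b]` controlled by `x`, relative to a gauge `e`
which plays the role of `ω ^ (1 / p)`; the continuity of `z` and `z'` is not included. -/
structure IsControlledOn (e : ℝ × ℝ → ℝ) (x : ℝ → W) (a b : ℝ) (z : ℝ → V)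
    (z' : ℝ → W →L[ℝ] V) : Prop where
  remainder : crpRemainder x z z' =O[𝓟 (timeSimplex a b)] fun q => e q ^ 2
  deriv : increment z' =O[𝓟 (timeSimplex a b)] e

namespace IsControlledOn

theorem mono (h : IsControlledOn e x c d z z') (hca : c ≤ a) (hbd : b ≤ d) :
    IsControlledOn e x a b z z' where
  remainder := h.remainder.mono (principal_mono.2 (timeSimplex_mono hca hbd))
  deriv := h.deriv.mono (principal_mono.2 (timeSimplex_mono hca hbd))

theorem congr {w : ℝ → V} {w' : ℝ → W →L[ℝ] V} (h : IsControlledOn e x a b z z')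
    (hw : EqOn z w (Icc a b)) (hw' : EqOn z' w' (Icc a b)) : IsControlledOn e x a b w w' where
  remainder := h.remainder.congr' (eventually_principal.2 fun q hq => by
    simp only [crpRemainder, increment, hw (fst_mem_Icc_of_mem_timeSimplex hq),
      hw (snd_mem_Icc_of_mem_timeSimplex hq), hw' (fst_mem_Icc_of_mem_timeSimplex hq)]) .rfl
  deriv := h.deriv.congr' (eventually_principal.2 fun q hq => by
    simp only [increment, hw' (fst_mem_Icc_of_mem_timeSimplex hq),
      hw' (snd_mem_Icc_of_mem_timeSimplex hq)]) .rfl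

theorem clm_comp (h : IsControlledOn e x a b z z') (A : V →L[ℝ] U) :
    IsControlledOn e x a b (fun s => A (z s)) (fun s => A.comp (z' s)) where
  remainder := by
    refine ((A.isBigO_comp _ _).trans h.remainder).congr_left fun q => ?_
    simp [crpRemainder, increment]
  deriv := by
    refine (((ContinuousLinearMap.compL ℝ W V U A).isBigO_comp _ _).trans h.deriv).congr_left
      fun q => ?_
    simp [increment]

theorem sum {ι : Type*} {I : Finset ι} {z : ι → ℝ → V} {z' : ι → ℝ → W →L[ℝ] V}
    (h : ∀ i ∈ I, IsControlledOn e x a b (z i) (z' i)) :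
    IsControlledOn e x a b (fun s => ∑ i ∈ I, z i s) (fun s => ∑ i ∈ I, z' i s) where
  remainder := by
    refine (IsBigO.fun_sum fun i hi => (h i hi).remainder).congr_left fun q => ?_
    simp [crpRemainder, increment]
  deriv := by
    refine (IsBigO.fun_sum fun i hi => (h i hi).deriv).congr_left fun q => ?_
    simp [increment]

theorem of_forall_dual [FiniteDimensional ℝ V]
    (h : ∀ A : V →L[ℝ] ℝ, IsControlledOn e x a b (fun s => A (z s)) (fun s => A.comp (z' s))) :
    IsControlledOn e x a b z z' := by
  let B := Module.finBasis ℝ V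
  let coord i : V →L[ℝ] ℝ := (B.coord i).toContinuousLinearMap
  have hrepr (v : V) : ∑ i, coord i v • B i = v := B.sum_repr v
  have hsum := sum (I := Finset.univ) fun i _ =>
    (h (coord i)).clm_comp (ContinuousLinearMap.toSpanSingleton ℝ (B i))
  refine hsum.congr (fun s _ => hrepr (z s)) fun s _ => ?_
  ext w
  simpa [sum_apply] using hrepr (z' s w)

theorem trans (he : IsGauge e a c) (hx : increment x =O[𝓟 (timeSimplex b c)] e)
    (h₁ : IsControlledOn e x a b z z') (h₂ : IsControlledOn e x b c z z') :
    IsControlledOn e x a c z z' := by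
  have hsplit : 𝓟 (timeSimplex a c) ≤
      𝓟 (timeSimplex a b) ⊔ 𝓟 (timeSimplex b c) ⊔ 𝓟 (Icc a b ×ˢ Icc b c) := by
    simpa only [sup_principal, principal_mono] using timeSimplex_subset_union b
  have hcross : (fun q : ℝ × ℝ => increment z' (q.1, b) (increment x (b, q.2)))
      =O[𝓟 (Icc a b ×ˢ Icc b c)] fun q => e q ^ 2 :=
    (isBigO_clm_apply (he.isBigO_left h₁.deriv) (he.isBigO_right hx)).congr_right
      fun q => (sq _).symm
  constructor
  · refine ((h₁.remainder.sup h₂.remainder).sup ?_).mono hsplit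
    refine ((((he.pow 2).isBigO_left h₁.remainder).add
      ((he.pow 2).isBigO_right h₂.remainder)).add hcross).congr_left fun q => ?_
    exact (crpRemainder_eq_add q.1 b q.2).symm
  · refine ((h₁.deriv.sup h₂.deriv).sup ?_).mono hsplit
    refine ((he.isBigO_left h₁.deriv).add (he.isBigO_right h₂.deriv)).congr_left fun q => ?_
    simp [increment]

theorem of_locally (he : IsGauge e a b) (hx : increment x =O[𝓟 (timeSimplex a b)] e)
    (hloc : ∀ s ∈ Icc a b, ∃ U ∈ 𝓝[Icc a b] s,
      ∀ c d, a ≤ c → c ≤ d → d ≤ b → Icc c d ⊆ U → IsControlledOn e x c d z z') :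
    IsControlledOn e x a b z z' := by
  rcases lt_or_ge b a with hba | hab
  · constructor <;> simp [timeSimplex_eq_empty hba]
  · exact forall_Icc_of_locally hab hloc fun c d hac' _ hdb hac hcd =>
      trans (he.mono_interval le_rfl hdb)
        (hx.mono (principal_mono.2 (timeSimplex_mono hac' hdb))) hac hcd

theorem increment_isBigO (he : IsGauge e a b) (hx : increment x =O[𝓟 (timeSimplex a b)] e)
    (h : IsControlledOn e x a b z z') : increment z =O[𝓟 (timeSimplex a b)] e := by
  have hsq : (fun q => e q ^ 2) =O[𝓟 (timeSimplex a b)] e := by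
    simpa [sq] using (isBigO_refl e _).mul he.isBigO_one
  have hz' := isBigO_fst_timeSimplex (he.isBigO_one_of_increment h.deriv)
  have hlin : (fun q => z' q.1 (increment x q)) =O[𝓟 (timeSimplex a b)] e := by
    simpa using isBigO_clm_apply hz' hx
  simpa [crpRemainder] using (h.remainder.trans hsq).add hlin

theorem comp (he : IsGauge e a b) (hx : increment x =O[𝓟 (timeSimplex a b)] e)
    (h : IsControlledOn e x a b z z') {F : V → U} {S : Set V} {K : ℝ≥0} (hS : Convex ℝ S)
    (hF : ∀ v ∈ S, DifferentiableAt ℝ F v) (hK : LipschitzOnWith K (fderiv ℝ F) S)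
    (hz : MapsTo z (Icc a b) S) :
    IsControlledOn e x a b (fun s => F (z s)) (fun s => (fderiv ℝ F (z s)).comp (z' s)) := by
  have hzinc := h.increment_isBigO he hx
  have hDinc : increment (fun s => fderiv ℝ F (z s)) =O[𝓟 (timeSimplex a b)] e := by
    refine IsBigO.trans (isBigO_principal.2 ⟨K, fun q hq => ?_⟩) hzinc
    exact hK.norm_sub_le (hz (snd_mem_Icc_of_mem_timeSimplex hq))
      (hz (fst_mem_Icc_of_mem_timeSimplex hq))
  have hD := isBigO_fst_timeSimplex (he.isBigO_one_of_increment hDinc)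
  have hz' := isBigO_snd_timeSimplex (he.isBigO_one_of_increment h.deriv)
  have htaylor : (fun q => increment (fun s => F (z s)) q - fderiv ℝ F (z q.1) (increment z q))
      =O[𝓟 (timeSimplex a b)] fun q => e q ^ 2 := by
    refine IsBigO.trans (isBigO_principal.2 ⟨K, fun q hq => ?_⟩) (hzinc.norm_left.pow 2)
    simpa only [increment, norm_pow, norm_norm] using
      norm_sub_sub_fderiv_le_of_lipschitzOnWith hS hF hK (hz (fst_mem_Icc_of_mem_timeSimplex hq))
        (hz (snd_mem_Icc_of_mem_timeSimplex hq))
  constructor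
  · have hlin : (fun q => fderiv ℝ F (z q.1) (crpRemainder x z z' q))
        =O[𝓟 (timeSimplex a b)] fun q => e q ^ 2 := by
      simpa using isBigO_clm_apply hD h.remainder
    refine (htaylor.add hlin).congr_left fun q => ?_
    simp [crpRemainder]
  · have hprod := (isBigO_clm_comp hDinc hz').add
      ((isBigO_clm_comp hD h.deriv).congr_right fun q => (by ring : 1 * e q = e q * 1))
    simp only [mul_one] at hprod
    refine hprod.congr_left fun q => ?_
    simp [increment]

end IsControlledOn

end Controlled

section Control

/-- The gauge `(s, t) ↦ ω(s, t) ^ (1 / p)`, by which the increments of a `p`-rough path with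
control `ω` are bounded. -/
def controlRoot (p : ℝ) (ω : ℝ → ℝ → ℝ) (q : ℝ × ℝ) : ℝ := ω q.1 q.2 ^ (1 / p)

variable {T p : ℝ} {ω : ℝ → ℝ → ℝ} {V : Type*} [NormedAddCommGroup V] [NormedSpace ℝ V]
  {z : ℝ → V}

theorem IsControl.mono (hω : IsControl T ω) {s s' t' t : ℝ} (hs : 0 ≤ s) (hss' : s ≤ s')
    (hst' : s' ≤ t') (htt' : t' ≤ t) (ht : t ≤ T) : ω s' t' ≤ ω s t := by
  have hleft := hω.superadditive hs hss' (hst'.trans htt') ht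
  have hright := hω.superadditive (hs.trans hss') hst' htt' ht
  have hleft_nonneg := hω.nonneg hs hss' (hst'.trans (htt'.trans ht))
  have hright_nonneg := hω.nonneg (hs.trans (hss'.trans hst')) htt' ht
  linarith

theorem IsControl.isGauge_controlRoot (hω : IsControl T ω) (hp : 0 ≤ p) :
    IsGauge (controlRoot p ω) 0 T where
  nonneg q hq := Real.rpow_nonneg (hω.nonneg hq.1 hq.2.1 hq.2.2) _
  mono q hq r hr :=
    Real.rpow_le_rpow (hω.nonneg (hq.1.trans hr.1) hr.2.1 (hr.2.2.trans hq.2.2))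
      (hω.mono hq.1 hr.1 hr.2.1 hr.2.2 hq.2.2) (by positivity)

theorem IsControl.continuousOn_controlRoot (hω : IsControl T ω) (hp : 0 ≤ p) :
    ContinuousOn (controlRoot p ω) (timeSimplex 0 T) :=
  hω.cont.rpow_const fun _ _ => .inr (by positivity)

theorem IsControl.controlRoot_self (hω : IsControl T ω) (hp : p ≠ 0) {s : ℝ}
    (hs : s ∈ Icc 0 T) : controlRoot p ω (s, s) = 0 := by
  simp [controlRoot, hω.zero hs.1 hs.2, Real.zero_rpow (inv_ne_zero hp)]

theorem controlRoot_sq {q : ℝ × ℝ} (hq : 0 ≤ ω q.1 q.2) :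
    controlRoot p ω q ^ 2 = ω q.1 q.2 ^ (2 / p) := by
  rw [controlRoot, ← Real.rpow_mul_natCast hq]
  congr 1
  push_cast
  ring

theorem isControlledOn_controlRoot_iff {W : Type*} [NormedAddCommGroup W] [NormedSpace ℝ W]
    {x : ℝ → W} {z' : ℝ → W →L[ℝ] V} {a b : ℝ} (hω : ∀ q ∈ timeSimplex a b, 0 ≤ ω q.1 q.2) :
    IsControlledOn (controlRoot p ω) x a b z z' ↔
      ∃ C : ℝ, ∀ ⦃s t : ℝ⦄, a ≤ s → s ≤ t → t ≤ b →
        ‖z t - z s - z' s (x t - x s)‖ ≤ C * ω s t ^ (2 / p) ∧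
        ‖z' t - z' s‖ ≤ C * ω s t ^ (1 / p) := by
  have hroot (q) (hq : q ∈ timeSimplex a b) : ‖controlRoot p ω q‖ = ω q.1 q.2 ^ (1 / p) :=
    Real.norm_of_nonneg (Real.rpow_nonneg (hω q hq) _)
  have hsq (q) (hq : q ∈ timeSimplex a b) : ‖controlRoot p ω q ^ 2‖ = ω q.1 q.2 ^ (2 / p) := by
    rw [controlRoot_sq (hω q hq), Real.norm_of_nonneg (Real.rpow_nonneg (hω q hq) _)]
  constructor
  · rintro ⟨hrem, hderiv⟩
    obtain ⟨C, hC⟩ := isBigO_principal.1 hrem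
    obtain ⟨D, hD⟩ := isBigO_principal.1 hderiv
    refine ⟨max C D, fun s t has hst htb => ?_⟩
    have hq : (s, t) ∈ timeSimplex a b := ⟨has, hst, htb⟩
    have hnonneg := hω _ hq
    constructor
    · refine (hC _ hq).trans ?_
      rw [hsq _ hq]
      gcongr
      exact le_max_left C D
    · refine (hD _ hq).trans ?_
      rw [hroot _ hq]
      gcongr
      exact le_max_right C D
  · rintro ⟨C, hC⟩
    refine ⟨isBigO_principal.2 ⟨C, fun q hq => ?_⟩, isBigO_principal.2 ⟨C, fun q hq => ?_⟩⟩
    · rw [hsq q hq]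
      exact (hC hq.1 hq.2.1 hq.2.2).1
    · rw [hroot q hq]
      exact (hC hq.1 hq.2.1 hq.2.2).2

theorem IsControl.isCRP_iff_isControlledOn (hω : IsControl T ω) (hp : 0 < p) {k : ℕ}
    {x : ℝ → Euc k} {z' : ℝ → Euc k →L[ℝ] V} (hz : ContinuousOn z (Icc 0 T)) :
    IsCRP p ω x 0 T z z' ↔ IsControlledOn (controlRoot p ω) x 0 T z z' := by
  have hiff := isControlledOn_controlRoot_iff (p := p) (x := x) (z := z) (z' := z')
    fun q (hq : q ∈ timeSimplex 0 T) => hω.nonneg hq.1 hq.2.1 hq.2.2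
  refine ⟨fun h => hiff.2 h.2.2, fun h => ⟨hz, ?_, hiff.1 h⟩⟩
  exact continuousOn_of_isBigO_increment (hω.continuousOn_controlRoot hp.le)
    (fun s hs => hω.controlRoot_self hp.ne' hs) h.deriv

end Control

section Manifold

theorem exists_contMDiff_eventuallyEq_comp_chart {n : ℕ∞} {E V M : Type*} [NormedAddCommGroup E]
    [NormedSpace ℝ E] [FiniteDimensional ℝ E] [NormedAddCommGroup V] [NormedSpace ℝ V]
    [TopologicalSpace M] [T2Space M] [ChartedSpace E M] {φ : OpenPartialHomeomorph M E}
    (hφ : φ ∈ IsManifold.maximalAtlas 𝓘(ℝ, E) n M) {K : Set M} (hK : IsCompact K)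
    (hKφ : K ⊆ φ.source) {g : E → V} (hg : ContDiffOn ℝ n g φ.target) :
    ∃ f : M → V, ContMDiff 𝓘(ℝ, E) 𝓘(ℝ, V) n f ∧ ∀ m ∈ K, f =ᶠ[𝓝 m] g ∘ φ := by
  have hKimage : IsCompact (φ '' K) := hK.image_of_continuousOn (φ.continuousOn.mono hKφ)
  have hKtarget : φ '' K ⊆ φ.target := image_subset_iff.2 fun m hm => φ.map_source (hKφ hm)
  obtain ⟨L, hL, hKL, hLφ⟩ := exists_compact_between hKimage φ.open_target hKtarget
  obtain ⟨χ, hχone, hχzero, -⟩ := exists_contMDiffMap_one_nhds_of_subset_interior 𝓘(ℝ, E)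
    hKimage.isClosed hKL
  let f : M → V := φ.source.indicator fun m => χ (φ m) • g (φ m)
  have hf_source {m : M} (hm : m ∈ φ.source) : f =ᶠ[𝓝 m] (fun v => χ v • g v) ∘ φ :=
    (φ.open_source.eventually_mem hm).mono fun q hq => indicator_of_mem hq _
  have hsupp : tsupport f ⊆ φ.source := by
    have hLclosed : IsClosed (φ.symm '' L) :=
      (hL.image_of_continuousOn (φ.continuousOn_symm.mono hLφ)).isClosed
    refine (closure_minimal (fun m hm => ?_) hLclosed).trans
      (image_subset_iff.2 fun v hv => φ.map_target (hLφ hv))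
    have hmφ : m ∈ φ.source := mem_of_indicator_ne_zero hm
    refine ⟨φ m, ?_, φ.left_inv hmφ⟩
    by_contra hmL
    exact hm (by simp [f, hχzero _ hmL])
  refine ⟨f, contMDiff_of_tsupport fun m hm => ?_, fun m hm => ?_⟩
  · have hmφ := hsupp hm
    have hχg : ContMDiffAt 𝓘(ℝ, E) 𝓘(ℝ, V) n (fun v => χ v • g v) (φ m) :=
      χ.contMDiff.contMDiffAt.smul
        (hg.contDiffAt (φ.open_target.mem_nhds (φ.map_source hmφ))).contMDiffAt
    exact (hχg.comp m (contMDiffAt_of_mem_maximalAtlas hφ hmφ)).congr_of_eventuallyEq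
      (hf_source hmφ)
  · have hχφ : ∀ᶠ q in 𝓝 m, χ (φ q) = 1 :=
      (φ.continuousAt (hKφ hm)).eventually
        (eventually_nhdsSet_iff_forall.1 hχone _ (mem_image_of_mem φ hm))
    filter_upwards [hf_source (hKφ hm), hχφ] with q hfq hχq
    simp [hfq, hχq]

variable {d : ℕ} {M : Type*} [TopologicalSpace M] [ChartedSpace (Euc d) M]

theorem realDeriv_eq_fderiv_comp_chartDeriv {φ : OpenPartialHomeomorph M (Euc d)} {m : M}
    (hφ : MDifferentiableAt (𝓡 d) (𝓡 d) φ m) {f : M → ℝ} {F : Euc d → ℝ}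
    (hF : DifferentiableAt ℝ F (φ m)) (hfF : f =ᶠ[𝓝 m] F ∘ φ) :
    realDeriv f m = (fderiv ℝ F (φ m)).comp (chartDeriv φ m) := by
  unfold realDeriv chartDeriv
  rw [hfF.mfderiv_eq]
  exact (mfderiv_comp m hF.mdifferentiableAt hφ).trans (by rw [mfderiv_eq_fderiv]; rfl)

variable [IsManifold (𝓡 d) (⊤ : ℕ∞) M] {T p : ℝ} {k : ℕ} {ω : ℝ → ℝ → ℝ} {x : ℝ → Euc k}
  {y : ℝ → M} {y' : (s : ℝ) → Euc k →L[ℝ] TangentSpace (𝓡 d) (y s)}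

theorem isChartCRP_iff_isControlledOn (hω : IsControl T ω) :
    IsChartCRP T p ω x y y' ↔
      ∀ φ ∈ IsManifold.maximalAtlas (𝓡 d) (⊤ : ℕ∞) M, ∀ a b, 0 ≤ a → a ≤ b → b ≤ T →
        MapsTo y (Icc a b) φ.source →
        IsControlledOn (controlRoot p ω) x a b (fun s => φ (y s))
          (fun s => (chartDeriv φ (y s)).comp (y' s)) := by
  refine forall₄_congr fun φ _ a b => forall₄_congr fun ha _ hb _ => ?_
  exact (isControlledOn_controlRoot_iff (x := x) (z := fun s => φ (y s))
    (z' := fun s => (chartDeriv φ (y s)).comp (y' s)) fun q hq =>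
      hω.nonneg (ha.trans hq.1) hq.2.1 (hq.2.2.trans hb)).symm

theorem IsChartCRP.isControlledOn_comp (hω : IsControl T ω) (hp : 0 ≤ p)
    (hx : increment x =O[𝓟 (timeSimplex 0 T)] controlRoot p ω) (hy : ContinuousOn y (Icc 0 T))
    (h : IsChartCRP T p ω x y y') {f : M → ℝ} (hf : ContMDiff (𝓡 d) 𝓘(ℝ, ℝ) (⊤ : ℕ∞) f) :
    IsControlledOn (controlRoot p ω) x 0 T (fun s => f (y s))
      (fun s => (realDeriv f (y s)).comp (y' s)) := by
  have he := hω.isGauge_controlRoot hp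
  refine .of_locally he hx fun s₀ hs₀ => ?_
  let φ := chartAt (Euc d) (y s₀)
  have hφ : φ ∈ IsManifold.maximalAtlas (𝓡 d) (⊤ : ℕ∞) M := IsManifold.chart_mem_maximalAtlas _
  have hφ₀ : y s₀ ∈ φ.source := mem_chart_source _ _
  have hF : ContDiffAt ℝ 2 (f ∘ φ.symm) (φ (y s₀)) :=
    (hf.contMDiffAt.comp _ ((contMDiffOn_symm_of_mem_maximalAtlas hφ).contMDiffAt
      (φ.open_target.mem_nhds (φ.map_source hφ₀)))).contDiffAt.of_le
        (WithTop.coe_le_coe.2 (le_top : (2 : ℕ∞) ≤ ⊤))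
  obtain ⟨r, hr, hdiff, K, hK⟩ := exists_ball_lipschitzOnWith_fderiv hF
  let O : Set M := φ.source ∩ φ ⁻¹' Metric.ball (φ (y s₀)) r
  have hO : O ∈ 𝓝 (y s₀) := (φ.isOpen_inter_preimage Metric.isOpen_ball).mem_nhds
    ⟨hφ₀, Metric.mem_ball_self hr⟩
  refine ⟨y ⁻¹' O, hy s₀ hs₀ hO, fun a b ha hab hb hys => ?_⟩
  have hchart := (isChartCRP_iff_isControlledOn hω).1 h φ hφ a b ha hab hb fun s hs => (hys hs).1
  refine (hchart.comp (he.mono_interval ha hb)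
    (hx.mono (principal_mono.2 (timeSimplex_mono ha hb))) (convex_ball _ r) hdiff hK
      fun s hs => (hys hs).2).congr (fun s hs => ?_) fun s hs => ?_
  · simp [φ.left_inv (hys hs).1]
  · have hfφ : f =ᶠ[𝓝 (y s)] (f ∘ φ.symm) ∘ φ := by
      filter_upwards [φ.open_source.mem_nhds (hys hs).1] with q hq
      simp [φ.left_inv hq]
    rw [realDeriv_eq_fderiv_comp_chartDeriv
      ((contMDiffAt_of_mem_maximalAtlas hφ (hys hs).1).mdifferentiableAt (by simp))
      (hdiff _ (hys hs).2) hfφ]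
    rfl

theorem isChartCRP_of_forall_isControlledOn [T2Space M] (hω : IsControl T ω)
    (hy : ContinuousOn y (Icc 0 T))
    (h : ∀ f : M → ℝ, ContMDiff (𝓡 d) 𝓘(ℝ, ℝ) (⊤ : ℕ∞) f →
      IsControlledOn (controlRoot p ω) x 0 T (fun s => f (y s))
        (fun s => (realDeriv f (y s)).comp (y' s))) :
    IsChartCRP T p ω x y y' := by
  refine (isChartCRP_iff_isControlledOn hω).2 fun φ hφ a b ha _ hb hys =>
    .of_forall_dual fun A => ?_
  obtain ⟨f, hf, hfA⟩ := exists_contMDiff_eventuallyEq_comp_chart hφ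
    (isCompact_Icc.image_of_continuousOn (hy.mono (Icc_subset_Icc ha hb)))
    (image_subset_iff.2 hys) A.contDiff.contDiffOn
  refine ((h f hf).mono ha hb).congr (fun s hs => ?_) fun s hs => ?_
  · exact (hfA _ (mem_image_of_mem y hs)).self_of_nhds
  · beta_reduce
    rw [realDeriv_eq_fderiv_comp_chartDeriv
      ((contMDiffAt_of_mem_maximalAtlas hφ (hys hs)).mdifferentiableAt (by simp))
      A.differentiableAt (hfA _ (mem_image_of_mem y hs)), A.fderiv]
    rfl

theorem isChartCRP_iff_forall_smooth_pushforward_CRP_general [T2Space M] (hp : 0 < p)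
    (hω : IsControl T ω)
    (hx : ∀ ⦃s t : ℝ⦄, 0 ≤ s → s ≤ t → t ≤ T → ‖x t - x s‖ ≤ ω s t ^ (1 / p))
    (hy : ContinuousOn y (Icc 0 T)) :
    IsChartCRP T p ω x y y' ↔
      ∀ f : M → ℝ, ContMDiff (𝓡 d) 𝓘(ℝ, ℝ) (⊤ : ℕ∞) f →
        IsCRP p ω x 0 T (fun s => f (y s)) (fun s => (realDeriv f (y s)).comp (y' s)) := by
  have hx' : increment x =O[𝓟 (timeSimplex 0 T)] controlRoot p ω :=
    isBigO_principal.2 ⟨1, fun q hq => by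
      simpa [increment, controlRoot] using (hx hq.1 hq.2.1 hq.2.2).trans (le_abs_self _)⟩
  have hcrp {f : M → ℝ} (hf : ContMDiff (𝓡 d) 𝓘(ℝ, ℝ) (⊤ : ℕ∞) f) :=
    hω.isCRP_iff_isControlledOn (x := x) (z' := fun s => (realDeriv f (y s)).comp (y' s)) hp
      (hf.continuous.comp_continuousOn hy)
  exact ⟨fun h f hf => (hcrp hf).2 (h.isControlledOn_comp hω hp.le hx' hy hf),
    fun h => isChartCRP_of_forall_isControlledOn hω hy fun f hf => (hcrp hf).1 (h f hf)⟩

end Manifold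

/-- **Smooth-function characterization of manifold-valued controlled rough paths.**
`(y, y')` is a chart-controlled rough path if and only if for every smooth `f : M → ℝ` the
push-forward `(f ∘ y, df ∘ y')` is an `ℝ`-valued rough path controlled by `X`. -/
theorem isChartCRP_iff_forall_smooth_pushforward_CRP
    {T p : ℝ} (hT : 0 < T) (hp1 : 1 ≤ p) (hp3 : p < 3) {k : ℕ} (hk : 1 ≤ k)
    {ω : ℝ → ℝ → ℝ} (hω : IsControl T ω)
    {x : ℝ → Euc k} {XX : ℝ → ℝ → EuclideanSpace ℝ (Fin k × Fin k)}
    (hX : IsRoughPath T p ω x XX) (hgeo : IsWeakGeometric T x XX)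
    {d : ℕ} {M : Type*} [TopologicalSpace M] [ChartedSpace (Euc d) M]
    [IsManifold (𝓡 d) (⊤ : ℕ∞) M] [T2Space M] [SecondCountableTopology M]
    {y : ℝ → M} (hy : ContinuousOn y (Set.Icc 0 T))
    (y' : (s : ℝ) → Euc k →L[ℝ] TangentSpace (𝓡 d) (y s)) :
    IsChartCRP T p ω x y y' ↔
      ∀ f : M → ℝ, ContMDiff (𝓡 d) 𝓘(ℝ, ℝ) (⊤ : ℕ∞) f →
        IsCRP p ω x 0 T (fun s => f (y s))
          (fun s => (realDeriv f (y s)).comp (y' s)) := by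
  exact isChartCRP_iff_forall_smooth_pushforward_CRP_general (zero_lt_one.trans_le hp1) hω
    hX.bound_x hy
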